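/- For every integer k ≥ 2, there exists a positive integer N such that for every integer r ≥ N, the interval [1,r] can be partitioned into exactly k pairwise disjoint MSTD subsets whose union is [1,r]. Consequently there is a smallest such integer R(k). -/

import Mathlib

/-!
Conway's set is MSTD, and so is its image under any injective affine map; hence `k - 2` disjoint
MSTD sets fit into the middle of `[1, r]` using only integers congruent to `2` modulo `4`. It
remains to split what is left into two MSTD sets. One of them takes the odd numbers of the middle,
the other the remaining even ones, and near the two ends fixed patterns decide, chosen as follows.

Write `L` and `R` for the elements of a set near the left and the right end of `[1, r]`, measured
from the points `0` and `r + 1` respectively. The difference `r + 1 - d` is missed as soon as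
`d ∉ L + R`, and missing one difference makes the set MSTD if all sums between the extreme ones
occur. Both the pair `(L, R)` and the pair of the complements have to miss `d`, which forces
`x ∈ R ↔ d - x ∉ L` for `0 < x < d`; a search among such pairs with `d = 17` gave the patterns
below.

Sums near the ends are sums of two elements of one pattern. For all other sums it is enough that
the set contains `h + 1` consecutive integers near each end and meets every interval of `h + 1`
consecutive integers in between. The even part satisfies this with `h = 3` because of the multiples
of `4`, so it does not suffer from the loss of the copies of Conway's set.
-/

open Finset Pointwise

/-- A finite set of integers is MSTD (more-sums-than-differences) if `|A+A| > |A-A|`. -/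
def MSTD (A : Finset ℤ) : Prop := (A - A).card < (A + A).card

/-- `[1,r]` can be partitioned into exactly `k` pairwise disjoint MSTD subsets. -/
def KDecomp (k : ℕ) (r : ℤ) : Prop :=
  ∃ f : Fin k → Finset ℤ, (∀ i, MSTD (f i)) ∧
    (∀ i j, i ≠ j → Disjoint (f i) (f j)) ∧
    Finset.univ.biUnion f = Finset.Icc 1 r

open scoped Function

theorem MSTD.image_mul_add {A : Finset ℤ} (hA : MSTD A) {a : ℤ} (ha : a ≠ 0) (b : ℤ) :
    MSTD (A.image fun x ↦ a * x + b) := by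
  have hsub : (A - A).image (fun x ↦ a * x) =
      A.image (fun x ↦ a * x + b) - A.image (fun x ↦ a * x + b) :=
    image_image₂_distrib fun x y ↦ by ring
  have hadd : (A + A).image (fun x ↦ a * x + 2 * b) =
      A.image (fun x ↦ a * x + b) + A.image (fun x ↦ a * x + b) :=
    image_image₂_distrib fun x y ↦ by ring
  have hinj : Function.Injective fun x ↦ a * x := mul_right_injective₀ ha
  have hinj' : Function.Injective fun x ↦ a * x + 2 * b := (add_left_injective (2 * b)).comp hinj
  rw [MSTD, ← hsub, ← hadd, card_image_of_injective _ hinj, card_image_of_injective _ hinj']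
  exact hA

section Cons

variable {α : Type*} {k : ℕ} {s : Finset α} {f : Fin k → Finset α}

theorem biUnion_univ_cons [DecidableEq α] :
    univ.biUnion (Fin.cons s f : Fin (k + 1) → Finset α) = s ∪ univ.biUnion f := by
  ext x
  simp [Fin.exists_fin_succ]

theorem pairwise_disjoint_cons (hs : ∀ i, Disjoint s (f i)) (hf : Pairwise (Disjoint on f)) :
    Pairwise (Disjoint on (Fin.cons s f : Fin (k + 1) → Finset α)) := by
  intro i j hij
  cases i using Fin.cases with
  | zero =>
    cases j using Fin.cases with
    | zero => exact absurd rfl hij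
    | succ j => exact hs j
  | succ i =>
    cases j using Fin.cases with
    | zero => exact (hs i).symm
    | succ j => exact hf fun h ↦ hij (congrArg Fin.succ h)

end Cons

theorem kDecomp_succ_of_mstd_sdiff {k : ℕ} {r : ℤ} {f : Fin k → Finset ℤ} (hf : ∀ i, MSTD (f i))
    (hdisj : Pairwise (Disjoint on f)) (hsub : univ.biUnion f ⊆ Icc 1 r)
    (hrest : MSTD (Icc 1 r \ univ.biUnion f)) : KDecomp (k + 1) r := by
  refine ⟨Fin.cons (Icc 1 r \ univ.biUnion f) f, Fin.cases hrest hf, ?_, ?_⟩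
  · refine fun i j hij ↦ pairwise_disjoint_cons (fun i ↦ ?_) hdisj hij
    exact disjoint_sdiff_self_left.mono_right (subset_biUnion_of_mem f (mem_univ i))
  · rw [biUnion_univ_cons, sdiff_union_of_subset hsub]

theorem mstd_of_Icc_subset_add {A : Finset ℤ} {lo hi d : ℤ} (hA : A ⊆ Icc lo hi)
    (hsum : Icc (2 * lo) (2 * hi) ⊆ A + A) (hd : d ∈ Icc (lo - hi) (hi - lo))
    (hdA : d ∉ A - A) : MSTD A := by
  have hsub : A - A ⊆ (Icc (lo - hi) (hi - lo)).erase d := by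
    refine subset_erase.2 ⟨sub_subset_iff.2 fun x hx y hy ↦ ?_, hdA⟩
    have hx' := mem_Icc.1 (hA hx)
    have hy' := mem_Icc.1 (hA hy)
    exact mem_Icc.2 (by omega)
  have hcard_sub := card_le_card hsub
  have hcard_add := card_le_card hsum
  rw [card_erase_of_mem hd, Int.card_Icc] at hcard_sub
  rw [Int.card_Icc] at hcard_add
  rw [mem_Icc] at hd
  unfold MSTD
  omega

theorem Icc_subset_add_of_windows {A B : Finset ℤ} {a h u v : ℤ} (hB : Icc a (a + h) ⊆ B)
    (hA : ∀ t ∈ Icc u v, ∃ x ∈ A, x ∈ Icc t (t + h)) :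
    Icc (a + u + h) (a + v + h) ⊆ A + B := by
  intro s hs
  rw [mem_Icc] at hs
  obtain ⟨x, hxA, hx⟩ := hA (s - a - h) (mem_Icc.2 (by omega))
  rw [mem_Icc] at hx
  exact mem_add.2 ⟨x, hxA, s - x, hB (mem_Icc.2 (by omega)), by ring⟩

theorem Icc_subset_add_self_of_windows {A : Finset ℤ} {a c h : ℤ} (ha : Icc a (a + h) ⊆ A)
    (hc : Icc c (c + h) ⊆ A) (hA : ∀ t ∈ Icc a c, ∃ x ∈ A, x ∈ Icc t (t + h)) :
    Icc (2 * a + h) (2 * c + h) ⊆ A + A := by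
  intro s hs
  rw [mem_Icc] at hs
  rcases le_total s (a + c + h) with hs' | hs'
  · exact Icc_subset_add_of_windows ha hA (mem_Icc.2 (by omega))
  · exact Icc_subset_add_of_windows hc hA (mem_Icc.2 (by omega))

/-- A pattern for the elements of a set near one of its ends, which are recorded by their distances
from a point beyond that end. It lies in `[lo, m]`, contains the block `[a, a + h]`, meets every
interval `[t, t + h]` between this block and `m`, and represents all sums from the least possible
one to `2 * a + h`. -/
structure IsFringe (L : Finset ℤ) (lo a h m : ℤ) : Prop where
  subset_Icc : L ⊆ Icc lo m
  block_subset : Icc a (a + h) ⊆ L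
  exists_mem_window : ∀ t ∈ Icc a (m - h), ∃ x ∈ L, x ∈ Icc t (t + h)
  Icc_subset_add : Icc (2 * lo) (2 * a + h) ⊆ L + L

section Fringe

variable {A L R : Finset ℤ} {n lo a h m : ℤ}

theorem IsFringe.Icc_subset_add_self (hL : IsFringe L lo a h m) (hR : IsFringe R lo a h m)
    (hLA : L ⊆ A) (hRA : ∀ x ∈ R, n - x ∈ A)
    (hmid : ∀ t ∈ Ioo (m - h) (n - m), ∃ x ∈ A, x ∈ Icc t (t + h)) :
    Icc (2 * lo) (2 * (n - lo)) ⊆ A + A := by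
  have hblock : Icc (n - a - h) (n - a - h + h) ⊆ A := by
    intro x hx
    rw [mem_Icc] at hx
    simpa only [sub_sub_cancel] using hRA (n - x) (hR.block_subset (mem_Icc.2 (by omega)))
  have hwin (t : ℤ) (ht : t ∈ Icc a (n - a - h)) : ∃ x ∈ A, x ∈ Icc t (t + h) := by
    rw [mem_Icc] at ht
    rcases le_or_gt t (m - h) with hlow | hlow
    · obtain ⟨x, hx, hxt⟩ := hL.exists_mem_window t (mem_Icc.2 ⟨ht.1, hlow⟩)
      exact ⟨x, hLA hx, hxt⟩
    rcases lt_or_ge t (n - m) with hhigh | hhigh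
    · exact hmid t (mem_Ioo.2 ⟨hlow, hhigh⟩)
    · obtain ⟨x, hx, hxt⟩ := hR.exists_mem_window (n - t - h) (mem_Icc.2 (by omega))
      rw [mem_Icc] at hxt
      exact ⟨n - x, hRA x hx, mem_Icc.2 (by omega)⟩
  intro s hs
  rw [mem_Icc] at hs
  rcases le_total s (2 * a + h) with hlow | hlow
  · exact add_subset_add hLA hLA (hL.Icc_subset_add (mem_Icc.2 ⟨hs.1, hlow⟩))
  rcases le_total s (2 * (n - a - h) + h) with hhigh | hhigh
  · exact Icc_subset_add_self_of_windows (hL.block_subset.trans hLA) hblock hwin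
      (mem_Icc.2 ⟨hlow, hhigh⟩)
  · have hs' : 2 * n - s ∈ Icc (2 * lo) (2 * a + h) := mem_Icc.2 (by omega)
    obtain ⟨x, hx, y, hy, hxy⟩ := mem_add.1 (hR.Icc_subset_add hs')
    exact mem_add.2 ⟨n - x, hRA x hx, n - y, hRA y hy, by omega⟩

theorem sub_notMem_sub_of_notMem_add {d : ℤ} (hA : A ⊆ Ioo 0 n) (hAL : ∀ x < d, x ∈ A → x ∈ L)
    (hAR : ∀ x < d, n - x ∈ A → x ∈ R) (hd : d ∉ L + R) : n - d ∉ A - A := by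
  intro hdA
  obtain ⟨x, hx, y, hy, hxy⟩ := mem_sub.1 hdA
  have hx' := mem_Ioo.1 (hA hx)
  have hy' := mem_Ioo.1 (hA hy)
  have hyL : y ∈ L := hAL y (by omega) hy
  have hxR : n - x ∈ R := hAR (n - x) (by omega) (by rwa [sub_sub_cancel])
  exact hd (mem_add.2 ⟨y, hyL, n - x, hxR, by omega⟩)

theorem mstd_of_isFringe {d : ℤ} (hL : IsFringe L lo a h m) (hR : IsFringe R lo a h m)
    (hAL : ∀ x ≤ m, x ∈ A ↔ x ∈ L) (hAR : ∀ x ≤ m, n - x ∈ A ↔ x ∈ R)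
    (hmid : ∀ t ∈ Ioo (m - h) (n - m), ∃ x ∈ A, x ∈ Icc t (t + h)) (hlo : 0 < lo)
    (hd : d ∈ Icc (2 * lo) m) (hdLR : d ∉ L + R) (hn : m ≤ n) : MSTD A := by
  rw [mem_Icc] at hd
  have hLA : L ⊆ A := fun x hx ↦ (hAL x (mem_Icc.1 (hL.subset_Icc hx)).2).2 hx
  have hRA (x : ℤ) (hx : x ∈ R) : n - x ∈ A := (hAR x (mem_Icc.1 (hR.subset_Icc hx)).2).2 hx
  have hA (x : ℤ) (hx : x ∈ A) : lo ≤ x ∧ lo ≤ n - x := by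
    have hlow (hxm : x ≤ m) : lo ≤ x := (mem_Icc.1 (hL.subset_Icc ((hAL x hxm).1 hx))).1
    have hhigh (hxm : n - x ≤ m) : lo ≤ n - x :=
      (mem_Icc.1 (hR.subset_Icc ((hAR (n - x) hxm).1 (by rwa [sub_sub_cancel])))).1
    omega
  refine mstd_of_Icc_subset_add (fun x hx ↦ mem_Icc.2 ?_)
    (hL.Icc_subset_add_self hR hLA hRA hmid) (d := n - d) (mem_Icc.2 (by omega))
    (sub_notMem_sub_of_notMem_add (fun x hx ↦ mem_Ioo.2 ?_) (fun x hx ↦ (hAL x (by omega)).1)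
      (fun x hx ↦ (hAR x (by omega)).1) hdLR)
  all_goals
    have := hA x hx
    omega

end Fringe

/-- The elements of `oddPart r` in `[1, 21]`. -/
def leftFringe : Finset ℤ := {1, 2, 3, 4, 7, 10, 11, 12, 17, 18, 19, 21}

/-- The distances from `r + 1`, up to `21`, of the elements of `oddPart r`. -/
def rightFringe : Finset ℤ := {1, 2, 3, 4, 8, 9, 11, 12, 17, 18, 19, 21}

theorem isFringe_leftFringe : IsFringe leftFringe 1 17 1 21 := by
  constructor <;> decide +kernel

theorem isFringe_rightFringe : IsFringe rightFringe 1 17 1 21 := by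
  constructor <;> decide +kernel

theorem isFringe_compl_leftFringe : IsFringe (Icc 1 21 \ leftFringe) 5 13 3 21 := by
  constructor <;> decide +kernel

theorem isFringe_compl_rightFringe : IsFringe (Icc 1 21 \ rightFringe) 5 13 3 21 := by
  constructor <;> decide +kernel

/-- The first of the two large sets of the partition of `[1, r]`: two fixed fringes and the odd
numbers between them. -/
noncomputable def oddPart (r : ℤ) : Finset ℤ :=
  {x ∈ Icc 1 r | x ∈ leftFringe ∨ r + 1 - x ∈ rightFringe ∨ (21 < x ∧ 21 < r + 1 - x ∧ x % 2 = 1)}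

section OddPart

variable {r x : ℤ}

theorem oddPart_subset_Icc : oddPart r ⊆ Icc 1 r := filter_subset _ _

theorem mem_oddPart_of_le (hr : 42 ≤ r) (hx : x ≤ 21) : x ∈ oddPart r ↔ x ∈ leftFringe := by
  have hleft := @isFringe_leftFringe.subset_Icc x
  have hright := @isFringe_rightFringe.subset_Icc (r + 1 - x)
  simp only [oddPart, mem_filter, mem_Icc] at *
  grind

theorem sub_mem_oddPart_of_le (hr : 42 ≤ r) (hx : x ≤ 21) :
    r + 1 - x ∈ oddPart r ↔ x ∈ rightFringe := by
  have hleft := @isFringe_leftFringe.subset_Icc (r + 1 - x)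
  have hright := @isFringe_rightFringe.subset_Icc x
  simp only [oddPart, mem_filter, mem_Icc, sub_sub_cancel] at *
  grind

theorem mem_oddPart_of_mid (hx : 21 < x) (hx' : x < r - 20) : x ∈ oddPart r ↔ x % 2 = 1 := by
  have hleft := @isFringe_leftFringe.subset_Icc x
  have hright := @isFringe_rightFringe.subset_Icc (r + 1 - x)
  simp only [oddPart, mem_filter, mem_Icc] at *
  grind

theorem mstd_oddPart (hr : 42 ≤ r) : MSTD (oddPart r) := by
  refine mstd_of_isFringe (n := r + 1) (d := 17) isFringe_leftFringe isFringe_rightFringe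
    (fun _ ↦ mem_oddPart_of_le hr) (fun _ ↦ sub_mem_oddPart_of_le hr) (fun t ht ↦ ?_)
    (by decide) (by decide) (by decide +kernel) (by omega)
  rw [mem_Ioo] at ht
  rcases eq_or_lt_of_le (show 21 ≤ t by omega) with rfl | hlow
  · exact ⟨21, (mem_oddPart_of_le hr le_rfl).2 (by decide), by simp⟩
  rcases eq_or_lt_of_le (show t ≤ r - 21 by omega) with rfl | hhigh
  · exact ⟨r + 1 - 21, (sub_mem_oddPart_of_le hr le_rfl).2 (by decide), mem_Icc.2 (by omega)⟩
  · exact ⟨t + (t + 1) % 2, (mem_oddPart_of_mid (by omega) (by omega)).2 (by omega),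
      mem_Icc.2 (by omega)⟩

end OddPart

/-- The second of the two large sets: whatever `oddPart r` and the set `C` leave over. It contains
the even numbers between the fringes that are not in `C`. -/
noncomputable def evenPart (r : ℤ) (C : Finset ℤ) : Finset ℤ := Icc 1 r \ (oddPart r ∪ C)

section EvenPart

variable {r x : ℤ} {C : Finset ℤ}

theorem mem_evenPart_of_le (hr : 42 ≤ r) (hx : x ≤ 21) (hxC : x ∉ C) :
    x ∈ evenPart r C ↔ x ∈ Icc 1 21 \ leftFringe := by
  simp only [evenPart, mem_sdiff, mem_union, mem_Icc, mem_oddPart_of_le hr hx]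
  grind

theorem sub_mem_evenPart_of_le (hr : 42 ≤ r) (hx : x ≤ 21) (hxC : r + 1 - x ∉ C) :
    r + 1 - x ∈ evenPart r C ↔ x ∈ Icc 1 21 \ rightFringe := by
  simp only [evenPart, mem_sdiff, mem_union, mem_Icc, sub_mem_oddPart_of_le hr hx]
  grind

theorem mem_evenPart_of_mid (hx : 21 < x) (hx' : x < r - 20) (hxC : x ∉ C) :
    x ∈ evenPart r C ↔ x % 2 = 0 := by
  simp only [evenPart, mem_sdiff, mem_union, mem_Icc, mem_oddPart_of_mid hx hx']
  grind

theorem mstd_evenPart (hr : 42 ≤ r) (hC : ∀ x ∈ C, 26 ≤ x ∧ x ≤ r - 25 ∧ x % 4 = 2) :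
    MSTD (evenPart r C) := by
  have hnotMem (x : ℤ) (hx : x < 26 ∨ r - 25 < x ∨ x % 4 = 0) : x ∉ C := fun hxC ↦ by
    have := hC x hxC
    omega
  have hleft (x : ℤ) (hx : x ≤ 21) := mem_evenPart_of_le hr hx (hnotMem x (by omega))
  have hright (x : ℤ) (hx : x ≤ 21) :=
    sub_mem_evenPart_of_le hr hx (hnotMem (r + 1 - x) (by omega))
  have hmid (x : ℤ) (hx : 21 < x) (hx' : x < r - 20) (heven : x % 2 = 0)
      (hxC : x < 26 ∨ r - 25 < x ∨ x % 4 = 0) : x ∈ evenPart r C :=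
    (mem_evenPart_of_mid hx hx' (hnotMem x hxC)).2 heven
  refine mstd_of_isFringe (n := r + 1) (d := 17) isFringe_compl_leftFringe
    isFringe_compl_rightFringe hleft hright (fun t ht ↦ ?_) (by decide) (by decide)
    (by decide +kernel) (by omega)
  rw [mem_Ioo] at ht
  rcases le_or_gt t 20 with hlow | hlow
  · exact ⟨20, (hleft 20 (by decide)).2 (by decide +kernel), mem_Icc.2 (by omega)⟩
  rcases le_or_gt (r - 22) t with hhigh | hhigh
  · exact ⟨r + 1 - 20, (hright 20 (by decide)).2 (by decide +kernel), mem_Icc.2 (by omega)⟩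
  -- A multiple of `4` always avoids `C`, but it may be the first point of the right fringe.
  rcases eq_or_ne (4 * ((t + 3) / 4)) (r - 20) with hlast | hlast
  · exact ⟨t + 1, hmid _ (by omega) (by omega) (by omega) (by omega), mem_Icc.2 (by omega)⟩
  · exact ⟨4 * ((t + 3) / 4), hmid _ (by omega) (by omega) (by omega) (by omega),
      mem_Icc.2 (by omega)⟩

end EvenPart

/-- Conway's example of an MSTD set. -/
def conwaySet : Finset ℤ := {0, 2, 3, 4, 7, 11, 12, 14}

theorem mstd_conwaySet : MSTD conwaySet := by
  unfold MSTD
  decide +kernel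

/-- The `i`-th copy of Conway's set inside `4ℤ + 2`. The offset `26` keeps the copies away from the
left fringe, the step `60 = 4 * 15` keeps them apart. -/
def conwayCopy (i : ℕ) : Finset ℤ := conwaySet.image fun x ↦ 4 * x + (60 * i + 26)

theorem mstd_conwayCopy (i : ℕ) : MSTD (conwayCopy i) := mstd_conwaySet.image_mul_add four_ne_zero _

theorem bounds_of_mem_conwayCopy {i : ℕ} {x : ℤ} (hx : x ∈ conwayCopy i) :
    60 * i + 26 ≤ x ∧ x ≤ 60 * i + 82 ∧ x % 4 = 2 := by
  obtain ⟨y, hy, rfl⟩ := mem_image.1 hx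
  have hy' : y ∈ Icc 0 14 := (by decide +kernel : conwaySet ⊆ Icc 0 14) hy
  rw [mem_Icc] at hy'
  omega

theorem disjoint_conwayCopy {i j : ℕ} (hij : i ≠ j) : Disjoint (conwayCopy i) (conwayCopy j) := by
  refine disjoint_left.2 fun x hi hj ↦ hij ?_
  have hi' := bounds_of_mem_conwayCopy hi
  have hj' := bounds_of_mem_conwayCopy hj
  omega

theorem kDecomp_add_two {m : ℕ} {r : ℤ} (hr : 60 * m + 47 ≤ r) : KDecomp (m + 2) r := by
  let copies : Fin m → Finset ℤ := fun i ↦ conwayCopy i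
  have hcopies (x : ℤ) (hx : x ∈ univ.biUnion copies) : 26 ≤ x ∧ x ≤ r - 25 ∧ x % 4 = 2 := by
    obtain ⟨i, -, hi⟩ := mem_biUnion.1 hx
    have := bounds_of_mem_conwayCopy hi
    omega
  have hodd (i : Fin m) : Disjoint (oddPart r) (copies i) := by
    refine disjoint_right.2 fun x hx hxodd ↦ ?_
    have hx' := hcopies x (mem_biUnion.2 ⟨i, mem_univ i, hx⟩)
    have := (mem_oddPart_of_mid (by omega) (by omega)).1 hxodd
    omega
  have hdisj : Pairwise (Disjoint on copies) := fun i j hij ↦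
    disjoint_conwayCopy (Fin.val_ne_of_ne hij)
  refine kDecomp_succ_of_mstd_sdiff (f := Fin.cons (oddPart r) copies)
    (Fin.cases (mstd_oddPart (by omega)) fun i ↦ mstd_conwayCopy i)
    (pairwise_disjoint_cons hodd hdisj) ?_ ?_
  · rw [biUnion_univ_cons]
    refine union_subset oddPart_subset_Icc fun x hx ↦ mem_Icc.2 ?_
    have := hcopies x hx
    omega
  · rw [biUnion_univ_cons]
    exact mstd_evenPart (by omega) hcopies

theorem stmt8 (k : ℕ) (hk : 2 ≤ k) :
    ∃ R : ℤ, 0 < R ∧ (∀ r : ℤ, R ≤ r → KDecomp k r) ∧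
      ∀ R' : ℤ, 0 < R' → (∀ r : ℤ, R' ≤ r → KDecomp k r) → R ≤ R' := by
  obtain ⟨m, rfl⟩ := Nat.exists_eq_add_of_le' hk
  obtain ⟨R, ⟨hpos, hR⟩, hmin⟩ := Int.exists_least_of_bdd
    (P := fun R : ℤ ↦ 0 < R ∧ ∀ r, R ≤ r → KDecomp (m + 2) r)
    ⟨0, fun R hR ↦ hR.1.le⟩ ⟨60 * m + 47, by omega, fun r hr ↦ kDecomp_add_two hr⟩
  exact ⟨R, hpos, hR, fun R' hpos' hR' ↦ hmin R' ⟨hpos', hR'⟩⟩
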